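/- arXiv:2501.06853 — 2 statements merged into one kernel-verified Lean document; each statement's English description precedes it below -/
import Mathlib

section
/- For every integer k ≥ 2 and every real ε > 0 there exists an ordered graph G with e(G) > 0 such that every subgraph G' of G containing no ascending path with k edges satisfies e(G') ≤ ((k−1)/(2k) + ε)·e(G). -/
/-!
Removing all ascending paths with `k` edges from an ordered graph amounts to labelling its vertices
by `Fin k` (the length of a longest ascending path ending at the vertex) so that labels strictly
increase along every remaining edge. It therefore suffices to find a finite acyclic digraph in which
every labelling of the vertices by `Fin k` makes at most a `(k - 1) / (2k) + ε` fraction of the arcs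
increasing (`exists_orderedGraph_of_digraph`).

*Weighted, fractional version* (`exists_weights`). Take a complete binary tree of depth `T` and give
a pair of leaves `i < j` a weight depending only on the height of their last common ancestor, such
that all `T` levels carry the same total weight. If each leaf `i` carries a probability vector
`q i` on `Fin k`, a node of the tree contributes `incForm L R`, the probability that independent
labels with laws `L` and `R` increase, where `L`, `R` are the averages of `q` over the leaves below
its left and right child. When `L = R` this is at most `(k - 1) / (2k)`, and in general the excess
is controlled by `|L - R|`. The averages of `q` along the tree form a bounded martingale, so the sum
over all levels of the mean of `|L - R| ^ 2` is bounded independently of `T`; hence the average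
excess tends to `0` as `T → ∞`.

*Removing the weights.* Each leaf is replaced by a copy of the plane `F_p × F_p`, and two leaves of
weight `w` are joined by `w` incidence graphs `x.1 * y.1 - x.2 - y.2 = c`. Two distinct
points lie on at most one common line, so these graphs are quasirandom (`card_inc_le`), and a
labelling of the blown-up digraph behaves like the fractional labelling by its label densities.
-/

/-- The number of edges of a graph. -/
noncomputable def eCount {n : ℕ} (G : SimpleGraph (Fin n)) : ℕ := G.edgeSet.ncard

/-- An ordered graph `G` on `Fin n` contains an ordered graph `F` on `Fin m` if there is a
strictly increasing map sending edges of `F` to edges of `G`. -/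
def OContains {m n : ℕ} (F : SimpleGraph (Fin m)) (G : SimpleGraph (Fin n)) : Prop :=
  ∃ g : Fin m → Fin n, StrictMono g ∧ ∀ u v, F.Adj u v → G.Adj (g u) (g v)

/-- `G` is `F`-free if it contains no copy of `F`. -/
def OFree {m n : ℕ} (F : SimpleGraph (Fin m)) (G : SimpleGraph (Fin n)) : Prop :=
  ¬ OContains F G

/-- The relative Turán density of an ordered graph `F`: the supremum of all `ς ∈ [0,1]`
such that every ordered graph `G` has an `F`-free subgraph `G'` with `e(G') ≥ ς·e(G)`. -/
noncomputable def relTuran {m : ℕ} (F : SimpleGraph (Fin m)) : ℝ :=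
  sSup {ς : ℝ | ς ∈ Set.Icc 0 1 ∧ ∀ (n : ℕ) (G : SimpleGraph (Fin n)),
    ∃ G' ≤ G, OFree F G' ∧ ς * (eCount G : ℝ) ≤ (eCount G' : ℝ)}

/-- The ascending path with `k` edges, on `k+1` vertices. -/
def ascPath (k : ℕ) : SimpleGraph (Fin (k + 1)) :=
  SimpleGraph.fromRel (fun i j => (i : ℕ) + 1 = (j : ℕ))

open Finset

/-! ### From path-free subgraphs to labellings -/

/-- `EndsPath H j v`: some ascending path with `j` edges of `H` ends at `v`. -/
def EndsPath {n : ℕ} (H : SimpleGraph (Fin n)) : ℕ → Fin n → Prop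
  | 0, _ => True
  | j + 1, v => ∃ u, u < v ∧ H.Adj u v ∧ EndsPath H j u

theorem EndsPath.exists_seq {n : ℕ} {H : SimpleGraph (Fin n)} :
    ∀ {j : ℕ} {v : Fin n}, EndsPath H j v →
      ∃ g : ℕ → Fin n, g j = v ∧ ∀ i < j, g i < g (i + 1) ∧ H.Adj (g i) (g (i + 1))
  | 0, v, _ => ⟨fun _ => v, rfl, fun i hi => absurd hi (Nat.not_lt_zero i)⟩
  | j + 1, v, h => by
    obtain ⟨u, huv, hadj, hu⟩ := h
    obtain ⟨g, hg, hs⟩ := hu.exists_seq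
    refine ⟨Function.update g (j + 1) v, by simp, fun i hi => ?_⟩
    rw [Function.update_of_ne (by omega : i ≠ j + 1)]
    rcases Nat.lt_succ_iff_lt_or_eq.1 hi with h | rfl
    · rw [Function.update_of_ne (by omega : i + 1 ≠ j + 1)]
      exact hs i h
    · simp [hg, huv, hadj]

theorem EndsPath.oContains {n k : ℕ} {H : SimpleGraph (Fin n)} {v : Fin n}
    (h : EndsPath H k v) : OContains (ascPath k) H := by
  obtain ⟨g, -, hs⟩ := h.exists_seq
  refine ⟨fun i => g i, Fin.strictMono_iff_lt_succ.2 fun i => by simpa using (hs i i.2).1, ?_⟩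
  intro u v huv
  rw [ascPath, SimpleGraph.fromRel_adj] at huv
  rcases huv.2 with h | h
  · have := (hs u (by omega)).2
    rwa [h] at this
  · have := (hs v (by omega)).2
    rw [h] at this
    exact this.symm

/-- A graph without ascending paths with `k` edges has a labelling by `Fin k` that strictly
increases along its edges. -/
theorem exists_labelling {n k : ℕ} (hk : 0 < k) {H : SimpleGraph (Fin n)}
    (hH : OFree (ascPath k) H) :
    ∃ f : Fin n → Fin k, ∀ u v, u < v → H.Adj u v → f u < f v := by
  classical
  have hno : ∀ v, ¬ EndsPath H k v := fun v hv => hH hv.oContains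
  have hlt : ∀ v, Nat.findGreatest (fun j => EndsPath H j v) (k - 1) < k := fun v =>
    lt_of_le_of_lt (Nat.findGreatest_le _) (by omega)
  refine ⟨fun v => ⟨_, hlt v⟩, fun u v huv hadj => ?_⟩
  have hu : EndsPath H (Nat.findGreatest (fun j => EndsPath H j u) (k - 1)) u :=
    Nat.findGreatest_spec (P := fun j => EndsPath H j u) (Nat.zero_le _) trivial
  have hv : EndsPath H (Nat.findGreatest (fun j => EndsPath H j u) (k - 1) + 1) v :=
    ⟨u, huv, hadj, hu⟩
  have hne : Nat.findGreatest (fun j => EndsPath H j u) (k - 1) + 1 ≠ k := fun h =>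
    hno v (h ▸ hv)
  have hle : Nat.findGreatest (fun j => EndsPath H j u) (k - 1) + 1 ≤ k - 1 :=
    Nat.le_sub_one_of_lt (lt_of_le_of_ne (hlt u) hne)
  exact Nat.le_findGreatest (P := fun j => EndsPath H j v) hle hv

theorem eCount_eq_card {n : ℕ} (H : SimpleGraph (Fin n)) [DecidableRel H.Adj] :
    eCount H = #{e : Fin n × Fin n | e.1 < e.2 ∧ H.Adj e.1 e.2} := by
  rw [eCount, ← Set.ncard_coe_finset]
  symm
  refine Set.ncard_congr (fun e _ => s(e.1, e.2)) ?_ ?_ ?_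
  · intro e he
    simp at he
    simpa using he.2
  · rintro ⟨a, b⟩ ⟨c, d⟩ h1 h2 h
    simp at h1 h2 h
    rcases h with h | ⟨rfl, rfl⟩
    · simp [h]
    · exact absurd h1.1 h2.1.asymm
  · intro e he
    induction e with | _ a b
    rw [SimpleGraph.mem_edgeSet] at he
    rcases lt_trichotomy a b with h | h | h
    · exact ⟨(a, b), by simpa using ⟨h, he⟩, rfl⟩
    · exact absurd h he.ne
    · exact ⟨(b, a), by simpa using ⟨h, he.symm⟩, Sym2.eq_swap⟩

/-- An acyclic digraph `r` (acyclicity being witnessed by the rank `ρ`) yields an ordered graph;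
label-increasing arcs of `r` bound the edges of path-free subgraphs. -/
theorem exists_orderedGraph_of_digraph {V : Type} [Fintype V] (r : V → V → Prop)
    [DecidableRel r] (ρ : V → ℕ) (hρ : ∀ u v, r u v → ρ u < ρ v) (k : ℕ) (hk : 0 < k) (C : ℝ)
    (hpos : 0 < #{e : V × V | r e.1 e.2})
    (hC : ∀ f : V → Fin k, (#{e : V × V | r e.1 e.2 ∧ f e.1 < f e.2} : ℝ) ≤
      C * #{e : V × V | r e.1 e.2}) :
    ∃ (n : ℕ) (G : SimpleGraph (Fin n)), 0 < eCount G ∧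
      ∀ G' ≤ G, OFree (ascPath k) G' → (eCount G' : ℝ) ≤ C * (eCount G : ℝ) := by
  classical
  -- Ties of the rank are broken by an arbitrary enumeration of `V`.
  let key : V → ℕ ×ₗ Fin (Fintype.card V) := fun v => toLex (ρ v, Fintype.equivFin V v)
  have hkey : Function.Injective key := fun u v h => by
    have := congrArg (fun z => (ofLex z).2) h
    simpa [key] using this
  let _ : LinearOrder V := LinearOrder.lift' key hkey
  have hlt : ∀ u v, r u v → u < v := fun u v h => by
    change key u < key v
    exact Prod.Lex.toLex_lt_toLex.2 (Or.inl (hρ u v h))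
  let φ : Fin (Fintype.card V) ≃o V := Fintype.orderIsoFinOfCardEq V rfl
  let G : SimpleGraph (Fin (Fintype.card V)) := SimpleGraph.fromRel fun a b => r (φ a) (φ b)
  have hG : ∀ a b, a < b → (G.Adj a b ↔ r (φ a) (φ b)) := fun a b hab => by
    rw [SimpleGraph.fromRel_adj]
    refine ⟨fun h => h.2.resolve_right fun h' => ?_, fun h => ⟨hab.ne, Or.inl h⟩⟩
    exact hab.asymm (φ.lt_iff_lt.1 (hlt _ _ h'))
  have hcount : eCount G = #{e : V × V | r e.1 e.2} := by
    rw [eCount_eq_card]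
    refine Finset.card_bij (fun e _ => (φ e.1, φ e.2)) ?_ ?_ ?_
    · intro e he
      simp only [mem_filter, mem_univ, true_and] at he ⊢
      exact (hG _ _ he.1).1 he.2
    · rintro ⟨a, b⟩ _ ⟨c, d⟩ _ h
      simpa using h
    · rintro ⟨u, v⟩ h
      simp only [mem_filter, mem_univ, true_and] at h
      have h' : φ.symm u < φ.symm v := φ.symm.lt_iff_lt.2 (hlt _ _ h)
      refine ⟨(φ.symm u, φ.symm v), ?_, by simp⟩
      simp only [mem_filter, mem_univ, true_and]
      exact ⟨h', (hG _ _ h').2 (by simpa using h)⟩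
  refine ⟨_, G, hcount ▸ hpos, fun G' hG' hfree => ?_⟩
  obtain ⟨f, hf⟩ := exists_labelling hk hfree
  rw [hcount]
  refine le_trans ?_ (hC (f ∘ φ.symm))
  rw [eCount_eq_card]
  norm_cast
  refine Finset.card_le_card_of_injOn (fun e => (φ e.1, φ e.2)) ?_ ?_
  · intro e he
    simp only [coe_filter, mem_univ, true_and, Set.mem_ofPred_eq] at he ⊢
    exact ⟨(hG _ _ he.1).1 (hG' he.2), by simpa using hf _ _ he.1 he.2⟩
  · rintro ⟨a, b⟩ _ ⟨c, d⟩ _ h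
    simpa using h

/-! ### The weighted fractional problem -/

/-- For probability vectors `x`, `y` on `Fin k`, the probability that independent labels `a`, `b`
with laws `x`, `y` satisfy `a < b`. -/
def incForm {k : ℕ} (x y : Fin k → ℝ) : ℝ := ∑ b, (∑ a ∈ Iio b, x a) * y b

theorem incForm_self_le {k : ℕ} (hk : 0 < k) {x : Fin k → ℝ} (hx : ∑ a, x a = 1) :
    incForm x x ≤ ((k : ℝ) - 1) / (2 * k) := by
  have hsq : 1 ≤ (k : ℝ) * ∑ a, x a ^ 2 := by
    have := sq_sum_le_card_mul_sum_sq (s := univ) (f := x)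
    simpa [hx] using this
  have hswap : incForm x x = ∑ b, (∑ a ∈ Ioi b, x a) * x b := by
    simp only [incForm, sum_mul]
    rw [Finset.sum_comm' (t' := univ) (s' := fun a => Ioi a) (by simp)]
    simp only [mul_comm]
  have htot : ∑ b, ((∑ a ∈ Iio b, x a) + x b + ∑ a ∈ Ioi b, x a) * x b = 1 := by
    have : ∀ b : Fin k, (∑ a ∈ Iio b, x a) + x b + ∑ a ∈ Ioi b, x a = 1 := fun b => by
      rw [← hx, ← Finset.sum_filter_add_sum_filter_not univ (fun a => a ≤ b) x]
      have h1 : (univ.filter fun a => a ≤ b) = insert b (Iio b) := by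
        ext a; simp [le_iff_eq_or_lt]
      have h2 : (univ.filter fun a => ¬ a ≤ b) = Ioi b := by
        ext a; simp
      rw [h1, h2, sum_insert (by simp)]
      ring
    simp [this, hx]
  simp only [add_mul, sum_add_distrib] at htot
  rw [← hswap] at htot
  have h2 : incForm x x + ∑ a, x a ^ 2 + incForm x x = 1 := by
    simpa [incForm, sq] using htot
  have hk' : (0 : ℝ) < k := by exact_mod_cast hk
  rw [le_div_iff₀ (by positivity)]
  nlinarith

theorem incForm_le {k : ℕ} (hk : 0 < k) {x y : Fin k → ℝ} (hx0 : ∀ a, 0 ≤ x a)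
    (hx : ∑ a, x a = 1) {δ : ℝ} (hδ : 0 < δ) :
    incForm x y ≤ ((k : ℝ) - 1) / (2 * k) + k * δ + δ⁻¹ * ∑ a, ((x a - y a) / 2) ^ 2 := by
  have h1 : incForm x y = incForm x x + ∑ b, (∑ a ∈ Iio b, x a) * (y b - x b) := by
    simp only [incForm, ← sum_add_distrib]
    exact sum_congr rfl fun b _ => by ring
  have h2 : ∑ b, (∑ a ∈ Iio b, x a) * (y b - x b) ≤
      ∑ b, (δ + δ⁻¹ * ((x b - y b) / 2) ^ 2) := by
    refine sum_le_sum fun b _ => ?_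
    have hs0 : 0 ≤ ∑ a ∈ Iio b, x a := sum_nonneg fun a _ => hx0 a
    have hs1 : ∑ a ∈ Iio b, x a ≤ 1 := hx ▸ sum_le_univ_sum_of_nonneg hx0
    have h3 : (∑ a ∈ Iio b, x a) * (y b - x b) ≤ 2 * |(x b - y b) / 2| := by
      calc _ ≤ (∑ a ∈ Iio b, x a) * |x b - y b| := by
            refine mul_le_mul_of_nonneg_left ?_ hs0
            rw [abs_sub_comm]; exact le_abs_self _
        _ ≤ 1 * |x b - y b| := mul_le_mul_of_nonneg_right hs1 (abs_nonneg _)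
        _ = _ := by rw [abs_div, abs_two]; ring
    refine h3.trans ?_
    rw [← sq_abs ((x b - y b) / 2)]
    generalize |(x b - y b) / 2| = t
    have : δ + δ⁻¹ * t ^ 2 - 2 * t = δ⁻¹ * (δ - t) ^ 2 := by field_simp; ring
    have : 0 ≤ δ⁻¹ * (δ - t) ^ 2 := by positivity
    linarith
  have h4 : ∑ b : Fin k, (δ + δ⁻¹ * ((x b - y b) / 2) ^ 2) =
      k * δ + δ⁻¹ * ∑ a, ((x a - y a) / 2) ^ 2 := by
    simp [sum_add_distrib, mul_sum]
  have := incForm_self_le hk hx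
  linarith

/-- The average of a family of vectors. -/
noncomputable def avg {ι : Type} [Fintype ι] {k : ℕ} (q : ι → Fin k → ℝ) (a : Fin k) : ℝ :=
  (∑ i, q i a) / Fintype.card ι

theorem sum_incForm {ι : Type} [Fintype ι] [Nonempty ι] {k : ℕ} (q q' : ι → Fin k → ℝ) :
    ∑ i, ∑ j, incForm (q i) (q' j) = (Fintype.card ι : ℝ) ^ 2 * incForm (avg q) (avg q') := by
  have hN : (Fintype.card ι : ℝ) ≠ 0 := by simp
  have h1 : ∑ i, ∑ j, incForm (q i) (q' j) =
      ∑ b, (∑ a ∈ Iio b, ∑ i, q i a) * ∑ j, q' j b := by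
    simp only [incForm]
    simp_rw [fun b : Fin k => Finset.sum_comm (s := Iio b) (t := univ) (f := fun a i => q i a),
      sum_mul_sum]
    exact (sum_congr rfl fun j _ => Finset.sum_comm).trans Finset.sum_comm
  rw [h1, incForm, mul_sum]
  refine sum_congr rfl fun b _ => ?_
  simp only [avg, ← sum_div]
  field_simp

theorem avg_nonneg {ι : Type} [Fintype ι] {k : ℕ} {q : ι → Fin k → ℝ}
    (hq : ∀ i a, 0 ≤ q i a) (a : Fin k) : 0 ≤ avg q a :=
  div_nonneg (sum_nonneg fun i _ => hq i a) (Nat.cast_nonneg _)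

theorem sum_avg {ι : Type} [Fintype ι] [Nonempty ι] {k : ℕ} {q : ι → Fin k → ℝ}
    (hq : ∀ i, ∑ a, q i a = 1) : ∑ a, avg q a = 1 := by
  simp only [avg, ← sum_div]
  rw [Finset.sum_comm]
  simp [hq]

/-- The tree weights of depth `T`. The last term of the estimate is the variance of `q` over the
leaves; it is what makes the induction on `T` work, since the increments of the martingale of
averages sum up to it. -/
theorem exists_tree_weights (T k : ℕ) (hk : 0 < k) {δ : ℝ} (hδ : 0 < δ) :
    ∃ (ι : Type) (_ : Fintype ι) (_ : Nonempty ι) (w : ι → ι → ℕ) (ρ : ι → ℕ),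
      (∀ i j, w i j ≠ 0 → ρ i < ρ j) ∧
      (∑ i, ∑ j, (w i j : ℝ)) = (Fintype.card ι : ℝ) ^ 2 / 4 * T ∧
      ∀ q : ι → Fin k → ℝ, (∀ i a, 0 ≤ q i a) → (∀ i, ∑ a, q i a = 1) →
        ∑ i, ∑ j, (w i j : ℝ) * incForm (q i) (q j) ≤ (Fintype.card ι : ℝ) ^ 2 / 4 *
          (T * (((k : ℝ) - 1) / (2 * k) + k * δ) +
            δ⁻¹ * ((∑ i, ∑ a, q i a ^ 2) / Fintype.card ι - ∑ a, avg q a ^ 2)) := by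
  induction T with
  | zero =>
    refine ⟨Unit, inferInstance, inferInstance, fun _ _ => 0, fun _ => 0, by simp, by simp, ?_⟩
    intro q _ _
    simp [avg]
  | succ T ih =>
    obtain ⟨ι, _, _, w, ρ, hρ, hw, hq⟩ := ih
    refine ⟨ι ⊕ ι, inferInstance, inferInstance,
      Sum.elim (fun i => Sum.elim (fun j => 2 * w i j) fun _ => 1)
        (fun i => Sum.elim (fun _ => 0) fun j => 2 * w i j),
      Sum.elim ρ fun i => ρ i + (univ.sup ρ + 1), ?_, ?_, ?_⟩
    · rintro (i | i) (j | j) h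
      · exact hρ i j (by simpa using h)
      · have : ρ i ≤ univ.sup ρ := le_sup (mem_univ i)
        simp only [Sum.elim_inl, Sum.elim_inr]
        omega
      · simp at h
      · have := hρ i j (by simpa using h)
        simpa using this
    · simp only [Fintype.sum_sum_type, Sum.elim_inl, Sum.elim_inr, Fintype.card_sum]
      push_cast
      simp only [sum_add_distrib, ← mul_sum, hw]
      simp
      ring
    · intro q hq0 hq1
      set L : ι → Fin k → ℝ := fun i => q (Sum.inl i) with hL
      set R : ι → Fin k → ℝ := fun i => q (Sum.inr i) with hR
      have hLb := hq L (fun i => hq0 _) (fun i => hq1 _)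
      have hRb := hq R (fun i => hq0 _) (fun i => hq1 _)
      have hB := incForm_le (y := avg R) hk (avg_nonneg fun i => hq0 (Sum.inl i))
        (sum_avg fun i => hq1 (Sum.inl i)) hδ
      have hN : (Fintype.card ι : ℝ) ≠ 0 := by simp
      have hsum : ∑ i, ∑ j, ((Sum.elim (fun i => Sum.elim (fun j => 2 * w i j) fun _ => 1)
          (fun i => Sum.elim (fun _ => 0) fun j => 2 * w i j) i j : ℕ) : ℝ) *
            incForm (q i) (q j) =
          2 * ∑ i, ∑ j, (w i j : ℝ) * incForm (L i) (L j) +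
          (Fintype.card ι : ℝ) ^ 2 * incForm (avg L) (avg R) +
          2 * ∑ i, ∑ j, (w i j : ℝ) * incForm (R i) (R j) := by
        rw [← sum_incForm]
        simp only [Fintype.sum_sum_type, Sum.elim_inl, Sum.elim_inr]
        push_cast
        simp only [sum_add_distrib, mul_sum, hL, hR, mul_assoc, one_mul, zero_mul, sum_const_zero,
          zero_add]
      have havg : ∀ a, avg q a = (avg L a + avg R a) / 2 := fun a => by
        simp only [avg, Fintype.sum_sum_type, Fintype.card_sum, hL, hR]
        push_cast
        field_simp
        ring
      -- The parallelogram law: the increment at the root is the loss of energy of the averages.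
      have hpar : ∑ a, ((avg L a - avg R a) / 2) ^ 2 =
          (∑ a, avg L a ^ 2 + ∑ a, avg R a ^ 2) / 2 - ∑ a, avg q a ^ 2 := by
        rw [← sum_add_distrib, sum_div, ← sum_sub_distrib]
        exact sum_congr rfl fun a _ => by rw [havg]; ring
      have hen : (∑ i, ∑ a, q i a ^ 2) / (Fintype.card (ι ⊕ ι) : ℝ) =
          ((∑ i, ∑ a, L i a ^ 2) / Fintype.card ι + (∑ i, ∑ a, R i a ^ 2) / Fintype.card ι) / 2 := by
        simp only [Fintype.sum_sum_type, Fintype.card_sum, hL, hR]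
        push_cast
        field_simp
        ring
      rw [hpar] at hB
      rw [hsum, hen, Fintype.card_sum]
      have hB' := mul_le_mul_of_nonneg_left hB (sq_nonneg (Fintype.card ι : ℝ))
      push_cast
      generalize ((k : ℝ) - 1) / (2 * k) = c at *
      linarith

theorem exists_weights (k : ℕ) (hk : 0 < k) {ε : ℝ} (hε : 0 < ε) :
    ∃ (ι : Type) (_ : Fintype ι) (w : ι → ι → ℕ) (ρ : ι → ℕ),
      (∀ i j, w i j ≠ 0 → ρ i < ρ j) ∧ 0 < ∑ i, ∑ j, (w i j : ℝ) ∧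
      ∀ q : ι → Fin k → ℝ, (∀ i a, 0 ≤ q i a) → (∀ i, ∑ a, q i a = 1) →
        ∑ i, ∑ j, (w i j : ℝ) * incForm (q i) (q j) ≤
          (((k : ℝ) - 1) / (2 * k) + ε) * ∑ i, ∑ j, (w i j : ℝ) := by
  have hk' : (0 : ℝ) < k := by exact_mod_cast hk
  set δ : ℝ := ε / (2 * k) with hδdef
  have hδ : 0 < δ := by positivity
  obtain ⟨T, hT⟩ := exists_nat_gt (2 / ε * δ⁻¹)
  have hT0 : (0 : ℝ) < T := lt_of_le_of_lt (by positivity) hT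
  obtain ⟨ι, _, _, w, ρ, hρ, hw, hq⟩ := exists_tree_weights T k hk hδ
  have hN : (0 : ℝ) < Fintype.card ι := by exact_mod_cast Fintype.card_pos
  refine ⟨ι, inferInstance, w, ρ, hρ, by rw [hw]; positivity, fun q hq0 hq1 => ?_⟩
  refine (hq q hq0 hq1).trans ?_
  rw [hw, mul_left_comm]
  refine mul_le_mul_of_nonneg_left ?_ (by positivity)
  have h1 : (∑ i, ∑ a, q i a ^ 2) / (Fintype.card ι : ℝ) ≤ 1 := by
    rw [div_le_one hN]
    have : ∀ i, ∑ a, q i a ^ 2 ≤ 1 := fun i => by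
      rw [← hq1 i]
      refine sum_le_sum fun a _ => ?_
      have : q i a ≤ 1 := by
        rw [← hq1 i]
        exact single_le_sum (fun b _ => hq0 i b) (mem_univ a)
      nlinarith [hq0 i a]
    calc _ ≤ ∑ i : ι, (1 : ℝ) := sum_le_sum fun i _ => this i
      _ = _ := by simp
  have h2 : 0 ≤ ∑ a, avg q a ^ 2 := sum_nonneg fun a _ => sq_nonneg _
  have h3 : δ⁻¹ * ((∑ i, ∑ a, q i a ^ 2) / Fintype.card ι - ∑ a, avg q a ^ 2) ≤ δ⁻¹ * 1 :=
    mul_le_mul_of_nonneg_left (by linarith) (by positivity)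
  have h4 : δ⁻¹ ≤ ε / 2 * T := by
    have := mul_le_mul_of_nonneg_left hT.le (by positivity : 0 ≤ ε / 2)
    have h5 : ε / 2 * (2 / ε * δ⁻¹) = δ⁻¹ := by field_simp
    linarith
  have h6 : k * δ = ε / 2 := by rw [hδdef]; field_simp
  rw [h6]
  linarith

/-! ### Quasirandomness of incidences in the plane -/

section Incidence

variable {p : ℕ} [Fact p.Prime]

/-- The point-line incidence relation on `F_p × F_p` with parameter `c`: the point `y` lies on the
line of slope `x.1` determined by `x` and `c`. -/
def Inc (c : ZMod p) (x y : ZMod p × ZMod p) : Prop := x.1 * y.1 - x.2 - y.2 = c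

instance (c : ZMod p) : DecidableRel (Inc c) := fun x y =>
  inferInstanceAs (Decidable (x.1 * y.1 - x.2 - y.2 = c))

theorem card_line (c : ZMod p) (x : ZMod p × ZMod p) : #{y | Inc c x y} = p := by
  have : (univ.filter fun y => Inc c x y) =
      univ.image fun t : ZMod p => (t, x.1 * t - x.2 - c) := by
    ext ⟨s, t⟩
    simp only [mem_filter, mem_univ, true_and, mem_image, Prod.mk.injEq]
    simp only [Inc]
    constructor
    · intro h
      exact ⟨s, rfl, by rw [← h]; ring⟩
    · rintro ⟨s, rfl, rfl⟩
      ring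
  rw [this, card_image_of_injective _ fun s t h => (Prod.mk.inj h).1]
  simp [ZMod.card]

/-- Two distinct lines meet in at most one point. -/
theorem card_two_lines (c : ZMod p) {x x' : ZMod p × ZMod p} (hne : x ≠ x') :
    #{y | Inc c x y ∧ Inc c x' y} ≤ 1 := by
  refine card_le_one.2 ?_
  rintro ⟨s, t⟩ h ⟨s', t'⟩ h'
  simp only [mem_filter, mem_univ, true_and] at h h'
  simp only [Inc] at h h'
  obtain ⟨h1, h2⟩ := h
  obtain ⟨h3, h4⟩ := h'
  have h5 : (x.1 - x'.1) * (s - s') = 0 := by linear_combination h1 - h2 - h3 + h4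
  rcases mul_eq_zero.1 h5 with h | h
  · exfalso
    have h6 : x.1 = x'.1 := sub_eq_zero.1 h
    refine hne (Prod.ext h6 ?_)
    linear_combination h2 - h1 + s * h6
  · have h6 : s = s' := sub_eq_zero.1 h
    refine Prod.ext h6 ?_
    linear_combination x.1 * h6 - h1 + h3

/-- Second moment of the number of lines of a family `X` through a point. -/
theorem sum_sq_deviation_le (c : ZMod p) (X : Finset (ZMod p × ZMod p)) :
    ∑ y, ((#{x ∈ X | Inc c x y} : ℝ) - #X / p) ^ 2 ≤ #X * p := by
  have hp : (0 : ℝ) < p := by exact_mod_cast (Fact.out : p.Prime).pos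
  have h1 : ∑ y, (#{x ∈ X | Inc c x y} : ℝ) = #X * p := by
    have := sum_card_bipartiteAbove_eq_sum_card_bipartiteBelow (s := X) (t := univ) (Inc c)
    simp only [bipartiteAbove, bipartiteBelow, card_line, sum_const, smul_eq_mul] at this
    exact_mod_cast this.symm
  have h2 : ∑ y, (#{x ∈ X | Inc c x y} : ℝ) ^ 2 ≤ #X * p + (#X : ℝ) ^ 2 := by
    have h3 : ∑ y, #{x ∈ X | Inc c x y} ^ 2 =
        ∑ x ∈ X, ∑ x' ∈ X, #{y | Inc c x y ∧ Inc c x' y} := by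
      simp only [sq, card_filter, sum_mul_sum]
      rw [Finset.sum_comm]
      refine sum_congr rfl fun x _ => ?_
      rw [Finset.sum_comm]
      refine sum_congr rfl fun x' _ => sum_congr rfl fun y _ => ?_
      by_cases ha : Inc c x y <;> by_cases hb : Inc c x' y <;> simp [ha, hb]
    have h4 : ∑ x ∈ X, ∑ x' ∈ X, #{y | Inc c x y ∧ Inc c x' y} ≤
        ∑ x ∈ X, ∑ x' ∈ X, ((if x = x' then p else 0) + 1) := by
      refine sum_le_sum fun x _ => sum_le_sum fun x' _ => ?_
      split_ifs with h
      · subst h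
        simp only [and_self, card_line]
        omega
      · simpa using card_two_lines c h
    have h5 : ∑ x ∈ X, ∑ x' ∈ X, ((if x = x' then p else 0) + 1) = #X * p + #X ^ 2 := by
      simp only [sum_add_distrib, Finset.sum_ite_eq]
      simp +contextual [sq]
    rw [h5, ← h3] at h4
    exact_mod_cast h4
  have h6 : ∑ y, ((#{x ∈ X | Inc c x y} : ℝ) - #X / p) ^ 2 =
      ∑ y, (#{x ∈ X | Inc c x y} : ℝ) ^ 2 - 2 * (#X / p) * ∑ y, (#{x ∈ X | Inc c x y} : ℝ) +
        p ^ 2 * (#X / p : ℝ) ^ 2 := by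
    rw [mul_sum, ← sum_sub_distrib]
    have : (p : ℝ) ^ 2 * (#X / p : ℝ) ^ 2 = ∑ _y : ZMod p × ZMod p, (#X / p : ℝ) ^ 2 := by
      simp [ZMod.card, sq]
    rw [this, ← sum_add_distrib]
    exact sum_congr rfl fun y _ => by ring
  rw [h6, h1]
  have h7 : 2 * ((#X : ℝ) / p) * (#X * p) = 2 * (#X : ℝ) ^ 2 := by field_simp
  have h8 : (p : ℝ) ^ 2 * (#X / p : ℝ) ^ 2 = (#X : ℝ) ^ 2 := by field_simp
  rw [h7, h8]
  linarith

theorem card_plane_le (X : Finset (ZMod p × ZMod p)) : (#X : ℝ) ≤ (p : ℝ) ^ 2 := by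
  have := card_le_univ X
  simp only [Fintype.card_prod, ZMod.card] at this
  rw [sq]
  exact_mod_cast this

/-- Quasirandomness: the number of incidences between `X` and `Y` is at most the expected number
`#X * #Y / p`, up to a small error. -/
theorem card_inc_le (c : ZMod p) (X Y : Finset (ZMod p × ZMod p)) {η : ℝ} (hη : 0 < η)
    (hp : 1 ≤ η ^ 2 * p) :
    ∑ y ∈ Y, (#{x ∈ X | Inc c x y} : ℝ) ≤ #X * #Y / p + η * p ^ 3 := by
  have hp0 : (0 : ℝ) < p := by exact_mod_cast (Fact.out : p.Prime).pos
  set D : ℝ := ∑ y ∈ Y, ((#{x ∈ X | Inc c x y} : ℝ) - #X / p) with hD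
  have h1 : D ^ 2 ≤ (η * p ^ 3) ^ 2 := by
    calc D ^ 2 ≤ #Y * ∑ y ∈ Y, ((#{x ∈ X | Inc c x y} : ℝ) - #X / p) ^ 2 :=
          sq_sum_le_card_mul_sum_sq
      _ ≤ #Y * ∑ y, ((#{x ∈ X | Inc c x y} : ℝ) - #X / p) ^ 2 := by
          refine mul_le_mul_of_nonneg_left ?_ (Nat.cast_nonneg _)
          exact sum_le_univ_sum_of_nonneg fun y => sq_nonneg _
      _ ≤ #Y * (#X * p) := mul_le_mul_of_nonneg_left (sum_sq_deviation_le c X) (Nat.cast_nonneg _)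
      _ ≤ (p : ℝ) ^ 2 * (p ^ 2 * p) := by
          gcongr <;> exact card_plane_le _
      _ = p ^ 5 * 1 := by ring
      _ ≤ p ^ 5 * (η ^ 2 * p) := by gcongr
      _ = _ := by ring
  have h2 : D ≤ η * p ^ 3 := le_of_sq_le_sq h1 (by positivity)
  have h3 : D = ∑ y ∈ Y, (#{x ∈ X | Inc c x y} : ℝ) - #X * #Y / p := by
    rw [hD, sum_sub_distrib]
    simp
    ring
  linarith

/-- The distribution of the labels of a labelling of the plane. -/
noncomputable def labelDensity {k : ℕ} (f : ZMod p × ZMod p → Fin k) (a : Fin k) : ℝ :=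
  (#{x | f x = a} : ℝ) / p ^ 2

theorem labelDensity_nonneg {k : ℕ} (f : ZMod p × ZMod p → Fin k) (a : Fin k) :
    0 ≤ labelDensity f a := by
  unfold labelDensity
  positivity

theorem sum_labelDensity {k : ℕ} (f : ZMod p × ZMod p → Fin k) :
    ∑ a, labelDensity f a = 1 := by
  have hp0 : (p : ℝ) ≠ 0 := by exact_mod_cast (Fact.out : p.Prime).ne_zero
  have h : (∑ a, #{x | f x = a}) = p * p := by
    rw [← card_eq_sum_card_fiberwise (f := f) (s := univ) (t := univ) (by simp)]
    simp [ZMod.card]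
  simp only [labelDensity, ← sum_div]
  have h' : (∑ a, (#{x | f x = a} : ℝ)) = p * p := by exact_mod_cast h
  rw [h']
  field_simp

/-- Label-increasing incidences are counted by the densities of the labels. -/
theorem card_inc_lt_le {k : ℕ} (c : ZMod p) (f g : ZMod p × ZMod p → Fin k) {η : ℝ} (hη : 0 < η)
    (hp : 1 ≤ η ^ 2 * p) :
    (#{e : (ZMod p × ZMod p) × (ZMod p × ZMod p) | Inc c e.1 e.2 ∧ f e.1 < g e.2} : ℝ) ≤
      p ^ 3 * (incForm (labelDensity f) (labelDensity g) + k * η) := by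
  have hp0 : (p : ℝ) ≠ 0 := by exact_mod_cast (Fact.out : p.Prime).ne_zero
  have h1 : #{e : (ZMod p × ZMod p) × (ZMod p × ZMod p) | Inc c e.1 e.2 ∧ f e.1 < g e.2} =
      ∑ b, ∑ y ∈ univ.filter (fun y => g y = b),
        #{x ∈ univ.filter (fun x => f x < b) | Inc c x y} := by
    have h2 : ∀ b, ∀ y ∈ univ.filter (fun y => g y = b),
        #{x ∈ univ.filter (fun x => f x < b) | Inc c x y} =
          #{x | Inc c x y ∧ f x < g y} := fun b y hy => by
      rw [filter_filter]
      simp only [mem_filter, mem_univ, true_and] at hy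
      simp only [hy, and_comm]
    rw [sum_congr rfl fun b _ => sum_congr rfl (h2 b), sum_fiberwise]
    simp only [card_filter, Fintype.sum_prod_type_right]
  have h3 : ∀ b, (#{x | f x < b} : ℝ) = p ^ 2 * ∑ a ∈ Iio b, labelDensity f a := fun b => by
    have h4 : #{x | f x < b} = ∑ a ∈ Iio b, #{x | f x = a} := by
      rw [card_eq_sum_card_fiberwise (f := f) (t := Iio b) (by intro x; simp)]
      refine sum_congr rfl fun a ha => congrArg card ?_
      ext x
      simp only [mem_Iio] at ha
      simp only [mem_filter, mem_univ, true_and]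
      exact ⟨fun h => h.2, fun h => ⟨h ▸ ha, h⟩⟩
    rw [h4]
    simp only [labelDensity, ← sum_div]
    push_cast
    field_simp
  rw [h1]
  push_cast
  refine (sum_le_sum fun b _ => card_inc_le c _ _ hη hp).trans (le_of_eq ?_)
  rw [sum_add_distrib, mul_add, incForm, mul_sum]
  congr 1
  · refine sum_congr rfl fun b _ => ?_
    rw [h3]
    simp only [labelDensity]
    field_simp
  · simp
    ring

end Incidence

/-! ### The blow-up -/

/-- The blow-up of a weighted digraph: pairs `i`, `j` of weight `w` are joined by the `w` incidence
graphs with parameters `0, …, w - 1`. -/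
def BlowUp {ι : Type} (p : ℕ) (w : ι → ι → ℕ) (u v : ι × (ZMod p × ZMod p)) : Prop :=
  (u.2.1 * v.2.1 - u.2.2 - v.2.2).val < w u.1 v.1

instance {ι : Type} (p : ℕ) (w : ι → ι → ℕ) : DecidableRel (BlowUp p w) := fun u v =>
  inferInstanceAs (Decidable ((u.2.1 * v.2.1 - u.2.2 - v.2.2).val < w u.1 v.1))

theorem sum_pairs {ι A : Type} [Fintype ι] [Fintype A] (F : (ι × A) × (ι × A) → ℕ) :
    ∑ e, F e = ∑ i, ∑ j, ∑ e : A × A, F ((i, e.1), (j, e.2)) := by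
  simp only [Fintype.sum_prod_type]
  exact sum_congr rfl fun i _ => Finset.sum_comm

/-- Arcs of the blow-up with a given property, sorted by end blocks and incidence parameter. -/
theorem card_blowUp {ι : Type} [Fintype ι] {p : ℕ} [Fact p.Prime] (w : ι → ι → ℕ)
    (P : ι × (ZMod p × ZMod p) → ι × (ZMod p × ZMod p) → Prop) [DecidableRel P] :
    #{e : (ι × (ZMod p × ZMod p)) × (ι × (ZMod p × ZMod p)) | BlowUp p w e.1 e.2 ∧ P e.1 e.2} =
      ∑ i, ∑ j, ∑ c ∈ univ.filter (fun c : ZMod p => c.val < w i j),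
        #{e : (ZMod p × ZMod p) × (ZMod p × ZMod p) | Inc c e.1 e.2 ∧ P (i, e.1) (j, e.2)} := by
  have h1 : ∀ i j, ∑ c ∈ univ.filter (fun c : ZMod p => c.val < w i j),
      #{e : (ZMod p × ZMod p) × (ZMod p × ZMod p) | Inc c e.1 e.2 ∧ P (i, e.1) (j, e.2)} =
      #{e : (ZMod p × ZMod p) × (ZMod p × ZMod p) |
        BlowUp p w (i, e.1) (j, e.2) ∧ P (i, e.1) (j, e.2)} := fun i j => by
    rw [card_eq_sum_card_fiberwise (f := fun e => e.1.1 * e.2.1 - e.1.2 - e.2.2)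
      (t := univ.filter fun c : ZMod p => c.val < w i j)]
    · refine sum_congr rfl fun c hc => congrArg card ?_
      ext e
      simp only [mem_filter, mem_univ, true_and] at hc
      simp only [mem_filter, mem_univ, true_and]
      simp only [Inc, BlowUp]
      constructor
      · rintro ⟨h, h'⟩
        exact ⟨⟨by rwa [h], h'⟩, h⟩
      · rintro ⟨⟨-, h'⟩, h⟩
        exact ⟨h, h'⟩
    · intro e he
      simp only [coe_filter, mem_univ, true_and, Set.mem_ofPred_eq] at he ⊢
      exact he.1
  simp only [h1]
  simp only [card_filter]
  exact sum_pairs _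

theorem card_val_lt {p m : ℕ} [NeZero p] (hm : m ≤ p) :
    #{c : ZMod p | c.val < m} = m := by
  rw [← card_range m]
  refine card_bij (fun c _ => c.val) (by simp) (fun a _ b _ h => ZMod.val_injective p h) ?_
  intro b hb
  have hb' : b < m := by simpa using hb
  have hv : (b : ZMod p).val = b := ZMod.val_cast_of_lt (by omega)
  exact ⟨b, by simpa [hv] using hb', hv⟩

theorem exists_extremal_graph_for_ascPath (k : ℕ) (hk : 2 ≤ k) (ε : ℝ) (hε : 0 < ε) :
    ∃ (n : ℕ) (G : SimpleGraph (Fin n)), 0 < eCount G ∧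
      ∀ G' ≤ G, OFree (ascPath k) G' →
        (eCount G' : ℝ) ≤ (((k : ℝ) - 1) / (2 * k) + ε) * (eCount G : ℝ) := by
  have hk0 : 0 < k := by omega
  have hkR : (0 : ℝ) < k := by exact_mod_cast hk0
  obtain ⟨ι, _, w, ρ, hρ, hw, hq⟩ := exists_weights k hk0 (half_pos hε)
  set η : ℝ := ε / (2 * k) with hηdef
  have hη : 0 < η := by positivity
  obtain ⟨m, hm⟩ := exists_nat_ge (1 / η ^ 2)
  obtain ⟨p, hpm, hpp⟩ := Nat.exists_infinite_primes (m + ∑ i, ∑ j, w i j)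
  have : Fact p.Prime := ⟨hpp⟩
  have hp0 : (0 : ℝ) < p := by exact_mod_cast hpp.pos
  have hpη : 1 ≤ η ^ 2 * p := by
    have h1 : (m : ℝ) ≤ p := by exact_mod_cast (Nat.le_add_right _ _).trans hpm
    have h2 := hm.trans h1
    rwa [div_le_iff₀' (by positivity)] at h2
  have hwp : ∀ i j, w i j ≤ p := fun i j => by
    have h1 : w i j ≤ ∑ j, w i j := single_le_sum (fun _ _ => Nat.zero_le _) (mem_univ j)
    have h2 : ∑ j, w i j ≤ ∑ i, ∑ j, w i j :=
      single_le_sum (f := fun i => ∑ j, w i j) (fun _ _ => Nat.zero_le _) (mem_univ i)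
    omega
  have hcount : (#{e : (ι × (ZMod p × ZMod p)) × (ι × (ZMod p × ZMod p)) |
      BlowUp p w e.1 e.2} : ℝ) = p ^ 3 * ∑ i, ∑ j, (w i j : ℝ) := by
    have h1 := card_blowUp (p := p) w (fun _ _ => True)
    simp only [and_true] at h1
    have h2 : ∀ c : ZMod p, #{e : (ZMod p × ZMod p) × (ZMod p × ZMod p) | Inc c e.1 e.2} =
        p ^ 3 := fun c => by
      have h3 : #{e : (ZMod p × ZMod p) × (ZMod p × ZMod p) | Inc c e.1 e.2} =
          ∑ x, #{y | Inc c x y} := by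
        simp only [card_filter, Fintype.sum_prod_type]
      rw [h3]
      simp [card_line, ZMod.card]
      ring
    simp only [h2, sum_const, card_val_lt (hwp _ _), smul_eq_mul, ← sum_mul] at h1
    rw [h1]
    push_cast
    ring
  refine exists_orderedGraph_of_digraph (BlowUp p w) (fun u => ρ u.1) ?_ k hk0 _ ?_ ?_
  · intro u v h
    exact hρ _ _ (Nat.ne_zero_of_lt h)
  · have : (0 : ℝ) < p ^ 3 * ∑ i, ∑ j, (w i j : ℝ) := by positivity
    rw [← hcount] at this
    exact_mod_cast this
  · intro f
    rw [hcount, card_blowUp w fun u v => f u < f v]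
    push_cast
    set q : ι → Fin k → ℝ := fun i => labelDensity fun x => f (i, x) with hqdef
    have hmain := hq q (fun i => labelDensity_nonneg _) (fun i => sum_labelDensity _)
    have h1 : ∀ i j, ∑ c ∈ univ.filter (fun c : ZMod p => c.val < w i j),
        (#{e : (ZMod p × ZMod p) × (ZMod p × ZMod p) |
          Inc c e.1 e.2 ∧ f (i, e.1) < f (j, e.2)} : ℝ) ≤
        p ^ 3 * ((w i j : ℝ) * incForm (q i) (q j) + k * η * w i j) := fun i j => by
      refine (sum_le_sum fun c _ => card_inc_lt_le c (fun x => f (i, x)) (fun y => f (j, y))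
        hη hpη).trans (le_of_eq ?_)
      rw [sum_const, card_val_lt (hwp _ _), nsmul_eq_mul]
      ring
    refine (sum_le_sum fun i _ => sum_le_sum fun j _ => h1 i j).trans ?_
    simp only [← mul_sum, sum_add_distrib]
    have h2 : k * η = ε / 2 := by rw [hηdef]; field_simp
    rw [h2, mul_left_comm]
    refine mul_le_mul_of_nonneg_left ?_ (by positivity)
    linarith
end

section
/- Let F be an ordered graph that contains an ascending path with ℓ edges for some integer ℓ ≥ 1. Then every ordered graph G has an F-free subgraph G' with 2ℓ·e(G') ≥ (ℓ−1)·e(G). In particular, ρ(F) ≥ (ℓ(F)−1)/(2ℓ(F)), where ℓ(F) denotes the number of edges of a longest ascending (monotone) path in F. -/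
/-- The spanning subgraph of `G` consisting of the edges along which the colouring `c` strictly
increases from the left to the right endpoint. -/
def colourUp {n ℓ : ℕ} (G : SimpleGraph (Fin n)) (c : Fin n → Fin ℓ) : SimpleGraph (Fin n) where
  Adj u v := G.Adj u v ∧ ((u < v ∧ c u < c v) ∨ (v < u ∧ c v < c u))
  symm := ⟨fun _ _ h => ⟨h.1.symm, h.2.symm⟩⟩
  loopless := ⟨fun _ h => G.loopless.irrefl _ h.1⟩

lemma colourUp_le {n ℓ : ℕ} (G : SimpleGraph (Fin n)) (c : Fin n → Fin ℓ) : colourUp G c ≤ G :=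
  fun _ _ h => h.1

lemma OContains.trans {a b d : ℕ} {A : SimpleGraph (Fin a)} {B : SimpleGraph (Fin b)}
    {D : SimpleGraph (Fin d)} (h₁ : OContains A B) (h₂ : OContains B D) : OContains A D := by
  obtain ⟨g, hg, hg'⟩ := h₁
  obtain ⟨f, hf, hf'⟩ := h₂
  exact ⟨f ∘ g, hf.comp hg, fun u v h => hf' _ _ (hg' _ _ h)⟩

/-- The `ℓ + 1` vertices of an ascending path would receive distinct colours out of `ℓ`. -/
lemma not_oContains_ascPath {n ℓ : ℕ} (G : SimpleGraph (Fin n)) (c : Fin n → Fin ℓ) :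
    ¬ OContains (ascPath ℓ) (colourUp G c) := by
  rintro ⟨g, hg, hadj⟩
  have hmono : StrictMono (c ∘ g) := by
    rw [Fin.strictMono_iff_lt_succ]
    intro i
    have hlt : g i.castSucc < g i.succ := hg Fin.castSucc_lt_succ
    have h : (ascPath ℓ).Adj i.castSucc i.succ := by
      simp [ascPath, SimpleGraph.fromRel_adj, Fin.ext_iff]
    rcases (hadj _ _ h).2 with h' | h'
    · exact h'.2
    · exact absurd h'.1 hlt.asymm
  simpa using Fintype.card_le_of_injective _ hmono.injective

/-- Edges correspond to adjacent pairs listed in increasing order. -/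
lemma eCount_eq_card_s3 {n : ℕ} (G : SimpleGraph (Fin n)) [DecidableRel G.Adj] :
    eCount G = (Finset.univ.filter fun p : Fin n × Fin n => p.1 < p.2 ∧ G.Adj p.1 p.2).card := by
  rw [eCount, ← Set.ncard_coe_finset]
  symm
  refine Set.ncard_congr (fun p _ => s(p.1, p.2)) ?_ ?_ ?_
  · rintro ⟨u, v⟩ h
    simp only [Finset.coe_filter, Finset.mem_univ, true_and, Set.mem_ofPred_eq] at h
    exact h.2
  · rintro ⟨u, v⟩ ⟨u', v'⟩ h h' he
    simp only [Finset.coe_filter, Finset.mem_univ, true_and, Set.mem_ofPred_eq] at h h'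
    rcases Sym2.eq_iff.1 he with ⟨rfl, rfl⟩ | ⟨rfl, rfl⟩
    · rfl
    · exact absurd h.1 h'.1.asymm
  · intro e
    induction e using Sym2.ind with
    | _ u v =>
      intro h
      have h : G.Adj u v := h
      rcases lt_or_gt_of_ne h.ne with hlt | hlt
      · exact ⟨(u, v), by simp [hlt, h], rfl⟩
      · exact ⟨(v, u), by simp [hlt, h.symm], Sym2.eq_swap⟩

/-- A proportion `1 / ℓ` of all colourings gives two distinct vertices the same colour: the colour
of the second vertex is free and then determines that of the first. -/
lemma card_colour_eq {n ℓ : ℕ} {u v : Fin n} (huv : u ≠ v) :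
    ℓ * (Finset.univ.filter fun c : Fin n → Fin ℓ => c u = c v).card = ℓ ^ n := by
  have h := Fintype.card_congr (α := Fin ℓ × {c : Fin n → Fin ℓ // c u = c v})
    (β := Fin n → Fin ℓ)
    { toFun := fun x => Function.update x.2.1 u x.1
      invFun := fun c => (c u, ⟨Function.update c u (c v), by simp [huv.symm]⟩)
      left_inv := by
        rintro ⟨a, c, hc⟩
        simp [huv.symm, ← hc]
      right_inv := by
        intro c
        simp }
  simpa [Fintype.card_subtype] using h

/-- A proportion `(ℓ - 1) / (2 ℓ)` of all colourings strictly increases along a given pair: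
reversing the pair swaps the colourings with `c u < c v` and those with `c v < c u`, which together are all the
colourings except the proportion `1 / ℓ` with `c u = c v`. -/
lemma card_colour_lt {n ℓ : ℕ} {u v : Fin n} (huv : u ≠ v) :
    2 * ℓ * (Finset.univ.filter fun c : Fin n → Fin ℓ => c u < c v).card = (ℓ - 1) * ℓ ^ n := by
  have hswap : (Finset.univ.filter fun c : Fin n → Fin ℓ => c u < c v).card
      = (Finset.univ.filter fun c : Fin n → Fin ℓ => c v < c u).card := by
    refine Finset.card_equiv (Equiv.arrowCongr (Equiv.swap u v) (Equiv.refl _)) fun c => ?_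
    simp
  have hsplit : (Finset.univ.filter fun c : Fin n → Fin ℓ => c u < c v).card
      + (Finset.univ.filter fun c : Fin n → Fin ℓ => c v < c u).card
      + (Finset.univ.filter fun c : Fin n → Fin ℓ => c u = c v).card = ℓ ^ n := by
    simp only [Finset.card_filter, ← Finset.sum_add_distrib]
    have hone (c : Fin n → Fin ℓ) : ((if c u < c v then 1 else 0) + (if c v < c u then 1 else 0)
        + if c u = c v then 1 else 0) = 1 := by
      rcases lt_trichotomy (c u) (c v) with h | h | h
      · simp [h, h.asymm, h.ne]
      · simp [h]
      · simp [h, h.asymm, h.ne']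
    simp [hone]
  have heq := card_colour_eq (ℓ := ℓ) huv
  rw [← hswap] at hsplit
  rw [Nat.sub_mul, one_mul]
  have := congrArg (ℓ * ·) hsplit
  simp only [mul_add, heq] at this
  rw [← this, mul_assoc, two_mul]
  simp

/-- Averaging over all colourings. -/
lemma exists_colouring {n ℓ : ℕ} (hℓ : 1 ≤ ℓ) (G : SimpleGraph (Fin n)) :
    ∃ c : Fin n → Fin ℓ, (ℓ - 1) * eCount G ≤ 2 * ℓ * eCount (colourUp G c) := by
  classical
  have : NeZero ℓ := ⟨by omega⟩
  set E := Finset.univ.filter fun p : Fin n × Fin n => p.1 < p.2 ∧ G.Adj p.1 p.2 with hE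
  have hup (c : Fin n → Fin ℓ) : eCount (colourUp G c)
      = ∑ p ∈ E, if c p.1 < c p.2 then 1 else 0 := by
    rw [eCount_eq_card_s3, Finset.sum_boole, hE, Finset.filter_filter, Nat.cast_id]
    congr 1
    ext p
    simp only [Finset.mem_filter, Finset.mem_univ, true_and]
    constructor
    · rintro ⟨h, h', h'' | h''⟩
      · exact ⟨⟨h, h'⟩, h''.2⟩
      · exact absurd h h''.1.asymm
    · rintro ⟨⟨h, h'⟩, h''⟩
      exact ⟨h, h', Or.inl ⟨h, h''⟩⟩
  have hsum : ∑ _c : Fin n → Fin ℓ, (ℓ - 1) * eCount G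
      ≤ ∑ c : Fin n → Fin ℓ, 2 * ℓ * eCount (colourUp G c) := by
    refine le_of_eq ?_
    simp_rw [hup]
    rw [← Finset.mul_sum, ← Finset.mul_sum, Finset.sum_comm, Finset.mul_sum E]
    have hp : ∀ p ∈ E, 2 * ℓ * (∑ c : Fin n → Fin ℓ, if c p.1 < c p.2 then 1 else 0)
        = (ℓ - 1) * ℓ ^ n := by
      intro p hp
      have hlt : p.1 < p.2 := (Finset.mem_filter.1 hp).2.1
      rw [← card_colour_lt hlt.ne, Finset.sum_boole, Nat.cast_id]
    rw [Finset.sum_congr rfl hp, eCount_eq_card_s3]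
    simp only [Finset.sum_const, Finset.card_univ, Fintype.card_pi_const, Fintype.card_fin,
      smul_eq_mul, ← hE]
    ring
  obtain ⟨c, -, hc⟩ := Finset.exists_le_of_sum_le Finset.univ_nonempty hsum
  exact ⟨c, hc⟩

theorem relTuran_lower_bound_of_contains_ascPath {m : ℕ} (F : SimpleGraph (Fin m))
    (ℓ : ℕ) (hℓ : 1 ≤ ℓ) (hF : OContains (ascPath ℓ) F) :
    (∀ (n : ℕ) (G : SimpleGraph (Fin n)),
      ∃ G' ≤ G, OFree F G' ∧ (ℓ - 1) * eCount G ≤ 2 * ℓ * eCount G') ∧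
    ((ℓ : ℝ) - 1) / (2 * ℓ) ≤ relTuran F := by
  have main : ∀ (n : ℕ) (G : SimpleGraph (Fin n)),
      ∃ G' ≤ G, OFree F G' ∧ (ℓ - 1) * eCount G ≤ 2 * ℓ * eCount G' := by
    intro n G
    obtain ⟨c, hc⟩ := exists_colouring hℓ G
    exact ⟨colourUp G c, colourUp_le G c, fun h => not_oContains_ascPath G c (hF.trans h), hc⟩
  refine ⟨main, ?_⟩
  have hℓ' : (1 : ℝ) ≤ ℓ := by exact_mod_cast hℓ
  refine le_csSup ⟨1, fun ς h => h.1.2⟩ ⟨⟨?_, ?_⟩, ?_⟩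
  · exact div_nonneg (by linarith) (by linarith)
  · rw [div_le_one (by linarith)]
    linarith
  · intro n G
    obtain ⟨G', hle, hfree, h⟩ := main n G
    refine ⟨G', hle, hfree, ?_⟩
    have h' : ((ℓ : ℝ) - 1) * eCount G ≤ 2 * ℓ * eCount G' := by
      rw [← Nat.cast_one (R := ℝ), ← Nat.cast_sub hℓ]
      exact_mod_cast h
    rw [div_mul_eq_mul_div, div_le_iff₀ (by linarith)]
    linarith
end
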